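/- Let n jobs be given, where job j has processing time p_j ∈ ℕ, weight w_j ∈ ℕ and due date d_j ∈ ℕ. For J ⊆ {1,…,n} and t ∈ ℕ, define OPT[J,t] ∈ ℕ as the minimum of ∑_{j∈J} w_j·max(0, C_j(π) − d_j) over all linear orderings π of J processed consecutively without idle time starting at time t, with OPT[∅,t] = 0. Then for every nonempty J ⊆ {1,…,n} and every t ∈ ℕ, OPT[J,t] = min_{j∈J} ( OPT[J∖{j}, t] + w_j·max(0, t + p(J) − d_j) ), where p(J) = ∑_{k∈J} p_k. -/

import Mathlib

/-- Total weighted tardiness of the jobs in the list, processed consecutively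
without idle time starting at time `t`, in the order given by the list
(`t + p j - d j` is the truncated subtraction on `ℕ`, i.e. `max 0 (C_j - d_j)`). -/
def tardCost {n : ℕ} (p w d : Fin n → ℕ) : ℕ → List (Fin n) → ℕ
  | _, [] => 0
  | t, j :: l => w j * ((t + p j) - d j) + tardCost p w d (t + p j) l

/-- `OPT p w d J t` : minimum total weighted tardiness over all orderings of `J`
processed consecutively without idle time starting at time `t`. -/
noncomputable def OPT {n : ℕ} (p w d : Fin n → ℕ) (J : Finset (Fin n)) (t : ℕ) : ℕ :=
  sInf { v : ℕ | ∃ l : List (Fin n), l.Nodup ∧ l.toFinset = J ∧ v = tardCost p w d t l }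

/-!
In a schedule of `J` the last job completes at time `t + p(J)` whatever the order of the others.
Removing the last job `j` therefore changes the cost by exactly `w j * max(0, t + p(J) - d j)`, and
the remaining jobs may be reordered optimally without affecting this term.
-/

/-- The linear orderings of a finite set `J`, encoded as lists in which every element of `J` occurs
exactly once and nothing else occurs; these are the schedules over which `OPT` minimizes. -/
def IsOrdering {α : Type*} [DecidableEq α] (l : List α) (J : Finset α) : Prop :=
  l.Nodup ∧ l.toFinset = J

namespace IsOrdering

variable {α : Type*} [DecidableEq α] {l : List α} {J : Finset α}

theorem toList (J : Finset α) : IsOrdering J.toList J :=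
  ⟨J.nodup_toList, J.toList_toFinset⟩

theorem sum_map {M : Type*} [AddCommMonoid M] (h : IsOrdering l J) (f : α → M) :
    (l.map f).sum = ∑ j ∈ J, f j := by
  rw [← h.2, List.sum_toFinset f h.1]

theorem append_singleton_iff {j : α} :
    IsOrdering (l ++ [j]) J ↔ j ∈ J ∧ IsOrdering l (J.erase j) := by
  have h_nodup : (l ++ [j]).Nodup ↔ j ∉ l ∧ l.Nodup := by
    rw [← List.concat_eq_append, List.nodup_concat]
  have h_toFinset : (l ++ [j]).toFinset = insert j l.toFinset := by
    rw [List.toFinset_append, List.toFinset_cons, List.toFinset_nil, insert_empty_eq,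
      Finset.union_singleton]
  simp only [IsOrdering, h_nodup, h_toFinset]
  constructor
  · rintro ⟨⟨hjl, hl⟩, rfl⟩
    exact ⟨Finset.mem_insert_self j _, hl,
      (Finset.erase_insert (List.mem_toFinset.not.mpr hjl)).symm⟩
  · rintro ⟨hj, hl, hlJ⟩
    refine ⟨⟨?_, hl⟩, hlJ ▸ Finset.insert_erase hj⟩
    rw [← List.mem_toFinset, hlJ]
    exact Finset.notMem_erase j J

theorem exists_eq_append_singleton (h : IsOrdering l J) (hJ : J.Nonempty) :
    ∃ j ∈ J, ∃ l', IsOrdering l' (J.erase j) ∧ l = l' ++ [j] := by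
  have hl : l ≠ [] := by
    rwa [← List.toFinset_nonempty_iff, h.2]
  have hlast := List.dropLast_append_getLast hl
  rw [← hlast, append_singleton_iff] at h
  exact ⟨l.getLast hl, h.1, l.dropLast, h.2, hlast.symm⟩

end IsOrdering

section Tardiness

variable {n : ℕ} (p w d : Fin n → ℕ)

theorem tardCost_append (t : ℕ) (l₁ l₂ : List (Fin n)) :
    tardCost p w d t (l₁ ++ l₂) =
      tardCost p w d t l₁ + tardCost p w d (t + (l₁.map p).sum) l₂ := by
  induction l₁ generalizing t with
  | nil => simp [tardCost]
  | cons j l₁ ih => simp [tardCost, ih, add_assoc]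

variable {J : Finset (Fin n)} {l : List (Fin n)} {j : Fin n}

theorem tardCost_append_singleton (t : ℕ) (hj : j ∈ J) (hl : IsOrdering l (J.erase j)) :
    tardCost p w d t (l ++ [j]) =
      tardCost p w d t l + w j * ((t + ∑ k ∈ J, p k) - d j) := by
  have h_completion : t + (l.map p).sum + p j = t + ∑ k ∈ J, p k := by
    rw [hl.sum_map, add_assoc, Finset.sum_erase_add J p hj]
  rw [tardCost_append, tardCost, tardCost, add_zero, h_completion]

theorem OPT_le_tardCost (t : ℕ) (hl : IsOrdering l J) : OPT p w d J t ≤ tardCost p w d t l :=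
  Nat.sInf_le ⟨l, hl.1, hl.2, rfl⟩

theorem exists_OPT_eq_tardCost (J : Finset (Fin n)) (t : ℕ) :
    ∃ l, IsOrdering l J ∧ OPT p w d J t = tardCost p w d t l := by
  have h_schedule := IsOrdering.toList J
  obtain ⟨l, h_nodup, h_toFinset, h_opt⟩ := Nat.sInf_mem
    (s := {v | ∃ l : List (Fin n), l.Nodup ∧ l.toFinset = J ∧ v = tardCost p w d t l})
    ⟨_, J.toList, h_schedule.1, h_schedule.2, rfl⟩
  exact ⟨l, ⟨h_nodup, h_toFinset⟩, h_opt⟩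

theorem OPT_le_OPT_erase_add (t : ℕ) (hj : j ∈ J) :
    OPT p w d J t ≤ OPT p w d (J.erase j) t + w j * ((t + ∑ k ∈ J, p k) - d j) := by
  obtain ⟨l, hl, h_opt⟩ := exists_OPT_eq_tardCost p w d (J.erase j) t
  rw [h_opt, ← tardCost_append_singleton p w d t hj hl]
  exact OPT_le_tardCost p w d t (IsOrdering.append_singleton_iff.mpr ⟨hj, hl⟩)

theorem exists_OPT_eq_OPT_erase_add (t : ℕ) (hJ : J.Nonempty) :
    ∃ j ∈ J, OPT p w d J t =
      OPT p w d (J.erase j) t + w j * ((t + ∑ k ∈ J, p k) - d j) := by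
  obtain ⟨l, hl, h_opt⟩ := exists_OPT_eq_tardCost p w d J t
  obtain ⟨j, hj, l', hl', rfl⟩ := hl.exists_eq_append_singleton hJ
  refine ⟨j, hj, (OPT_le_OPT_erase_add p w d t hj).antisymm ?_⟩
  rw [h_opt, tardCost_append_singleton p w d t hj hl']
  gcongr
  exact OPT_le_tardCost p w d t hl'

end Tardiness

theorem stmt2 {n : ℕ} (p w d : Fin n → ℕ) (J : Finset (Fin n)) (hJ : J.Nonempty) (t : ℕ) :
    OPT p w d J t =
      sInf { v : ℕ | ∃ j ∈ J,
        v = OPT p w d (J.erase j) t + w j * ((t + ∑ k ∈ J, p k) - d j) } := by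
  have h_least : IsLeast { v : ℕ | ∃ j ∈ J,
      v = OPT p w d (J.erase j) t + w j * ((t + ∑ k ∈ J, p k) - d j) } (OPT p w d J t) := by
    refine ⟨exists_OPT_eq_OPT_erase_add p w d t hJ, ?_⟩
    rintro _ ⟨j, hj, rfl⟩
    exact OPT_le_OPT_erase_add p w d t hj
  exact h_least.csInf_eq.symm
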